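/- arXiv:1809.06912 — 2 statements merged into one kernel-verified Lean document; each statement's English description precedes it below -/
import Mathlib

section
/- Let a₁ < a₂ < a₃ < a₄ < a₅ be natural numbers. Then there exists an ergodic measure preserving system (X, ℬ, μ, T) such that for every ℓ > 0 there exists a set A ∈ ℬ with μ(A) > 0 satisfying μ(T^{−a₁n}A ∩ T^{−a₂n}A ∩ T^{−a₃n}A ∩ T^{−a₄n}A ∩ T^{−a₅n}A) < μ(A)^ℓ for every n ∈ ℕ with n ≠ 0. -/
/-!
Along the skew product `(x, y) ↦ (x + 2β, y + x + β)` the second coordinate of the orbit is the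
quadratic sequence `y + n x + n² β`. A vector-valued quadratic `v` which at five integers takes
values on one sphere is constant, because `‖v‖²` has degree at most `4`. Following Behrend, write
the integer points of a sphere in `[0, m)ᵈ` as digit strings in a base proportional to `m`. The
integer relations satisfied by quadratics at the five nodes cause no carries, so the resulting
finite set `Z` of points of the circle inherits this rigidity, even up to a small error `ε`. Let `A`
be the strip of points whose second coordinate is within `ε` of `Z`. Simultaneous returns to `A`
then take place near a single point of `Z`, and two of the five returns are already independent
events, so the intersection has measure at most `#Z (2ε)²` while `μ A = 2ε #Z`. As spheres contain
about `m ^ (d - 2)` points and `ε` is of order `m ^ (-d)`, a large dimension `d` beats the power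
`ℓ`.
-/

open MeasureTheory

section PolynomialConfigurations

open Polynomial

theorem natDegree_eq_zero_of_sum_sq_eq_C {R κ : Type*} [CommRing R] [LinearOrder R]
    [IsStrictOrderedRing R] {s : Finset κ} {P : κ → R[X]} {r : R}
    (h : ∑ j ∈ s, P j ^ 2 = C r) {j : κ} (hj : j ∈ s) : (P j).natDegree = 0 := by
  set N := s.sup fun j => (P j).natDegree with hN
  have hle : ∀ j ∈ s, (P j).natDegree ≤ N := fun j hj =>
    Finset.le_sup (f := fun j => (P j).natDegree) hj
  by_contra hne
  have hN0 : 0 < N := (Nat.pos_of_ne_zero hne).trans_le (hle j hj)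
  have hcoeff : ∑ j ∈ s, (P j).coeff N ^ 2 = 0 := by
    have h2N := congrArg (coeff · (2 * N)) h
    simp only [finsetSum_coeff, coeff_C_of_ne_zero (by omega : 2 * N ≠ 0)] at h2N
    rw [← h2N]
    exact Finset.sum_congr rfl fun j hj => (coeff_pow_of_natDegree_le (hle j hj)).symm
  obtain ⟨j₀, hj₀, hdeg⟩ := s.exists_mem_eq_sup ⟨j, hj⟩ fun j => (P j).natDegree
  rw [← hN] at hdeg
  have hlead : (P j₀).leadingCoeff = 0 := by
    rw [Finset.sum_eq_zero_iff_of_nonneg fun _ _ => sq_nonneg _] at hcoeff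
    rw [leadingCoeff, ← hdeg]
    exact pow_eq_zero_iff two_ne_zero |>.1 (hcoeff j₀ hj₀)
  rw [leadingCoeff_eq_zero.1 hlead, natDegree_zero] at hdeg
  omega

theorem natDegree_eq_zero_of_sum_sq_eval_eq {R κ ι : Type*} [CommRing R] [LinearOrder R]
    [IsStrictOrderedRing R] [Fintype ι] {s : Finset κ} {P : κ → R[X]} {k : ℕ}
    (hP : ∀ j ∈ s, (P j).natDegree ≤ k) {x : ι → R} (hx : Function.Injective x)
    (hk : 2 * k < Fintype.card ι) {r : R} (h : ∀ i, ∑ j ∈ s, (P j).eval (x i) ^ 2 = r)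
    {j : κ} (hj : j ∈ s) : (P j).natDegree = 0 := by
  refine natDegree_eq_zero_of_sum_sq_eq_C (s := s) (r := r) (sub_eq_zero.1 ?_) hj
  refine eq_zero_of_natDegree_lt_card_of_eval_eq_zero _ hx
    (fun i => by simp [eval_finsetSum, h]) (lt_of_le_of_lt ?_ hk)
  rw [natDegree_sub_C]
  exact natDegree_sum_le_of_forall_le _ _ fun j hj => natDegree_pow_le_of_le 2 (hP j hj)

variable {ι : Type*} [Fintype ι]

/-- An integer linear relation satisfied by the values at the nodes `a i` of every polynomial map
of degree at most `k` into an abelian group. -/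
def AnnihilatesPolynomials (a : ι → ℤ) (k : ℕ) (c : ι → ℤ) : Prop :=
  ∀ l ≤ k, ∑ i, c i * a i ^ l = 0

theorem AnnihilatesPolynomials.sum_smul_eq_zero {a : ι → ℤ} {k : ℕ} {c : ι → ℤ}
    (hc : AnnihilatesPolynomials a k c) {G : Type*} [AddCommGroup G]
    (u : Fin (k + 1) → G) : ∑ i, c i • ∑ l : Fin (k + 1), a i ^ (l : ℕ) • u l = 0 := by
  simp only [Finset.smul_sum, smul_smul]
  rw [Finset.sum_comm]
  refine Finset.sum_eq_zero fun l _ => ?_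
  rw [← Finset.sum_smul, hc l l.is_le, zero_smul]

theorem coeff_card_sub_one_eq_sum_nodalWeight [DecidableEq ι] {F : Type*} [Field F] {x : ι → F}
    (hx : Function.Injective x) {P : F[X]} (hP : P.degree < Fintype.card ι) :
    P.coeff (Fintype.card ι - 1) = ∑ i, Lagrange.nodalWeight Finset.univ x i * P.eval (x i) := by
  rw [← Finset.card_univ] at hP ⊢
  simp only [Lagrange.coeff_eq_sum hx.injOn hP, Lagrange.nodalWeight, Finset.prod_inv_distrib,
    div_eq_inv_mul]

theorem natDegree_interpolate_le_of_sum_eq_zero [DecidableEq ι] {F : Type*} [Field F] {x : ι → F}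
    (hx : Function.Injective x) {k : ℕ} {y : ι → F}
    (h : ∀ l, l + k + 1 < Fintype.card ι →
      ∑ i, Lagrange.nodalWeight Finset.univ x i * x i ^ l * y i = 0) :
    (Lagrange.interpolate Finset.univ x y).natDegree ≤ k := by
  set P := Lagrange.interpolate Finset.univ x y with hP
  by_contra! hlt
  have hP0 : P ≠ 0 := fun h0 => by simp [h0] at hlt
  have hdeg : P.natDegree < Fintype.card ι :=
    (natDegree_lt_iff_degree_lt hP0).2 (Lagrange.degree_interpolate_lt y hx.injOn)
  -- Multiplication by `X ^ l` moves the leading coefficient of `P` to the degree `card ι - 1`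
  -- at which coefficients can be computed from the values at the nodes.
  obtain ⟨l, hl⟩ : ∃ l, l + P.natDegree + 1 = Fintype.card ι :=
    ⟨Fintype.card ι - P.natDegree - 1, by omega⟩
  have hXP : (X ^ l * P : F[X]).degree < Fintype.card ι := by
    rw [← natDegree_lt_iff_degree_lt (by simp [hP0]), natDegree_X_pow_mul l hP0]
    omega
  have hlead : P.leadingCoeff = 0 := calc
    P.leadingCoeff = (X ^ l * P).coeff (Fintype.card ι - 1) := by
      rw [← hl, Nat.add_sub_cancel, add_comm, coeff_X_pow_mul, leadingCoeff]
    _ = ∑ i, Lagrange.nodalWeight Finset.univ x i * x i ^ l * y i := by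
      rw [coeff_card_sub_one_eq_sum_nodalWeight hx hXP]
      simp only [hP, eval_mul, eval_pow, eval_X,
        Lagrange.eval_interpolate_at_node y hx.injOn (Finset.mem_univ _), mul_assoc]
    _ = 0 := h l (by omega)
  exact hP0 (leadingCoeff_eq_zero.1 hlead)

theorem sum_nodalWeight_mul_pow_eq_zero [DecidableEq ι] {F : Type*} [Field F] {x : ι → F}
    (hx : Function.Injective x) {l : ℕ} (hl : l + 1 < Fintype.card ι) :
    ∑ i, Lagrange.nodalWeight Finset.univ x i * x i ^ l = 0 := by
  have hdeg : (X ^ l : F[X]).degree < Fintype.card ι := by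
    rw [degree_X_pow]
    exact_mod_cast by omega
  have h := coeff_card_sub_one_eq_sum_nodalWeight hx hdeg
  rw [coeff_X_pow, if_neg (by omega)] at h
  simpa only [eval_pow, eval_X] using h.symm

theorem exists_finset_annihilatesPolynomials {a : ι → ℤ} (ha : Function.Injective a) (k : ℕ) :
    ∃ Γ : Finset (ι → ℤ), (∀ c ∈ Γ, AnnihilatesPolynomials a k c) ∧
      ∀ y : ι → ℤ, (∀ c ∈ Γ, ∑ i, c i * y i = 0) →
        ∃ P : ℚ[X], P.natDegree ≤ k ∧ ∀ i, P.eval (a i : ℚ) = y i := by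
  classical
  have hx : Function.Injective fun i => (a i : ℚ) := Int.cast_injective.comp ha
  obtain ⟨⟨D, hD⟩, hw⟩ := IsLocalization.exist_integer_multiples_of_finite (nonZeroDivisors ℤ)
    (Lagrange.nodalWeight Finset.univ fun i => (a i : ℚ))
  choose w hw using hw
  have hD0 : (D : ℚ) ≠ 0 := by exact_mod_cast nonZeroDivisors.ne_zero hD
  have hwD : ∀ i, (w i : ℚ) = D * Lagrange.nodalWeight Finset.univ (fun i => (a i : ℚ)) i :=
    fun i => by simpa using hw i
  -- Nodal weights times low powers of the nodes, cleared of denominators.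
  refine ⟨(Finset.range (Fintype.card ι - k - 1)).image fun l i => w i * a i ^ l, ?_, ?_⟩
  · refine Finset.forall_mem_image.2 fun l hl l' hl' => ?_
    rw [Finset.mem_range] at hl
    have h := sum_nodalWeight_mul_pow_eq_zero hx (l := l + l') (by omega)
    have : (∑ i, w i * a i ^ l * a i ^ l' : ℚ) = 0 := by
      simp only [hwD, mul_assoc, ← pow_add, ← Finset.mul_sum, h, mul_zero]
    exact_mod_cast this
  · intro y hy
    refine ⟨Lagrange.interpolate Finset.univ (fun i => (a i : ℚ)) fun i => (y i : ℚ),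
      natDegree_interpolate_le_of_sum_eq_zero hx fun l hl => ?_,
      fun i => Lagrange.eval_interpolate_at_node _ hx.injOn (Finset.mem_univ i)⟩
    have h : (∑ i, w i * a i ^ l * y i : ℚ) = 0 := by
      exact_mod_cast hy _ (Finset.mem_image_of_mem _ (Finset.mem_range.2 (by omega)))
    refine (mul_eq_zero_iff_left hD0).1 ?_
    rw [← h, Finset.mul_sum]
    exact Finset.sum_congr rfl fun i _ => by rw [hwD]; ring

theorem exists_finset_annihilatesPolynomials_forall_sphere_eq {a : ι → ℤ}
    (ha : Function.Injective a) {k : ℕ} (hk : 2 * k < Fintype.card ι) :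
    ∃ Γ : Finset (ι → ℤ), (∀ c ∈ Γ, AnnihilatesPolynomials a k c) ∧
      ∀ {κ : Type*} [Fintype κ] (v : ι → κ → ℤ) (r : ℤ), (∀ c ∈ Γ, ∑ i, c i • v i = 0) →
        (∀ i, ∑ j, v i j ^ 2 = r) → ∀ i i', v i = v i' := by
  obtain ⟨Γ, hΓ, hinterp⟩ := exists_finset_annihilatesPolynomials ha k
  refine ⟨Γ, hΓ, fun v r hv hr i i' => funext fun j => ?_⟩
  choose P hPdeg hPeval using fun j => hinterp (fun i => v i j) fun c hc => by
    simpa using congrFun (hv c hc) j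
  have hdeg : (P j).natDegree = 0 :=
    natDegree_eq_zero_of_sum_sq_eval_eq (s := Finset.univ) (fun j _ => hPdeg j)
      (Int.cast_injective.comp ha) hk (r := r)
      (fun i => by simp only [Function.comp_apply, hPeval]; exact_mod_cast hr i) (Finset.mem_univ j)
  have hval : (v i j : ℚ) = v i' j := by
    rw [← hPeval, ← hPeval, eq_C_of_natDegree_eq_zero hdeg, eval_C, eval_C]
  exact_mod_cast hval

end PolynomialConfigurations

section Coding

theorem eq_zero_of_pow_dvd_sum_mul_pow {B : ℤ} :
    ∀ {d : ℕ} {w : Fin d → ℤ}, (∀ j, |w j| < B) → B ^ d ∣ ∑ j, w j * B ^ (j : ℕ) → w = 0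
  | 0, _, _, _ => Subsingleton.elim _ _
  | d + 1, w, hw, h => by
    have hB : B ≠ 0 := ((abs_nonneg _).trans_lt (hw 0)).ne'
    have hsum : ∑ j, w j * B ^ (j : ℕ) = w 0 + B * ∑ j : Fin d, w j.succ * B ^ (j : ℕ) := by
      rw [Fin.sum_univ_succ, Finset.mul_sum]
      simp [pow_succ', mul_left_comm]
    rw [hsum] at h
    have h0 : w 0 = 0 := Int.eq_zero_of_abs_lt_dvd
      ((Int.dvd_add_left (dvd_mul_right _ _)).1 ((dvd_pow_self B d.succ_ne_zero).trans h)) (hw 0)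
    rw [h0, zero_add, pow_succ', mul_dvd_mul_iff_left hB] at h
    have htail := eq_zero_of_pow_dvd_sum_mul_pow (fun j => hw j.succ) h
    exact funext (Fin.cases h0 (congrFun htail))

theorem dvd_of_norm_coe_div_lt {q : ℕ} (hq : 0 < q) {z : ℤ}
    (h : ‖(((z : ℝ) / q : ℝ) : UnitAddCircle)‖ < 1 / q) : (q : ℤ) ∣ z := by
  have hq' : (0 : ℝ) < q := Nat.cast_pos.2 hq
  rw [UnitAddCircle.norm_eq, lt_div_iff₀ hq', ← abs_of_pos hq', ← abs_mul, abs_of_pos hq',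
    sub_mul, div_mul_cancel₀ _ hq'.ne'] at h
  have hround : |z - round ((z : ℝ) / q) * (q : ℤ)| < 1 := by exact_mod_cast h
  rw [Int.abs_lt_one_iff, sub_eq_zero] at hround
  exact hround ▸ dvd_mul_left _ _

/-- The point of the circle with the finite base `B` expansion
`0.w (d - 1) ... w 1 w 0`, where negative digits are allowed. -/
noncomputable def digitCode (B d : ℕ) : (Fin d → ℤ) →+ UnitAddCircle where
  toFun w := ((∑ j, w j * (B : ℤ) ^ (j : ℕ) : ℤ) / (B ^ d : ℕ) : ℝ)
  map_zero' := by simp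
  map_add' v w := by simp [add_mul, Finset.sum_add_distrib, add_div]

theorem one_div_pow_le_norm_digitCode {B d : ℕ} {w : Fin d → ℤ} (hw : ‖w‖ < B) (hw0 : w ≠ 0) :
    1 / (B : ℝ) ^ d ≤ ‖digitCode B d w‖ := by
  contrapose! hw0
  have hB : 0 < B := by exact_mod_cast (norm_nonneg w).trans_lt hw
  refine eq_zero_of_pow_dvd_sum_mul_pow (B := B) (fun j => ?_) ?_
  · have hj := (norm_le_pi_norm w j).trans_lt hw
    rw [Int.norm_eq_abs] at hj
    exact_mod_cast hj
  · rw [← Nat.cast_pow]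
    exact dvd_of_norm_coe_div_lt (pow_pos hB d) (hw0.trans_eq (by rw [Nat.cast_pow]))

theorem norm_sum_zsmul_le {ι G : Type*} [SeminormedAddCommGroup G] (s : Finset ι) (c : ι → ℤ)
    {x : ι → G} {ε : ℝ} (hx : ∀ i ∈ s, ‖x i‖ ≤ ε) :
    ‖∑ i ∈ s, c i • x i‖ ≤ (∑ i ∈ s, (c i).natAbs : ℕ) * ε := by
  rw [Nat.cast_sum, Finset.sum_mul]
  refine norm_sum_le_of_le s fun i hi => (norm_zsmul_le _ _).trans ?_
  rw [Nat.cast_natAbs, Int.cast_abs, ← Int.norm_eq_abs]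
  gcongr
  exact hx i hi

/-- Polynomial sequences of degree at most `k` that pass within `ε` of points of `Z` at the times
`a i` do so only near one single point of `Z`. -/
def IsPolynomialRigid {ι G : Type*} [SeminormedAddCommGroup G] (a : ι → ℤ) (k : ℕ) (Z : Set G)
    (ε : ℝ) : Prop :=
  ∀ (u : Fin (k + 1) → G) (z : ι → G), (∀ i, z i ∈ Z) →
    (∀ i, ‖∑ l : Fin (k + 1), a i ^ (l : ℕ) • u l - z i‖ ≤ ε) → ∀ i i', z i = z i'

/-- The digit codes in base `B` of the integer points of `[0, m)ᵈ` on the sphere of squared radius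
`r`. -/
noncomputable def codedSphere (B d m r : ℕ) : Finset UnitAddCircle :=
  (Behrend.sphere d m r).image fun v => digitCode B d fun j => v j

theorem norm_natCast_le_of_mem_sphere {d m r : ℕ} {v : Fin d → ℕ}
    (hv : v ∈ Behrend.sphere d m r) : ‖fun j => (v j : ℤ)‖ ≤ m :=
  (pi_norm_le_iff_of_nonneg m.cast_nonneg).2 fun j => by
    rw [Int.norm_natCast]
    exact_mod_cast (Behrend.mem_box.1 (Behrend.sphere_subset_box hv) j).le

theorem one_div_pow_le_dist_digitCode {B d m r : ℕ} (hB : 2 * m < B) {v w : Fin d → ℕ}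
    (hv : v ∈ Behrend.sphere d m r) (hw : w ∈ Behrend.sphere d m r) (hvw : v ≠ w) :
    1 / (B : ℝ) ^ d ≤ dist (digitCode B d fun j => v j) (digitCode B d fun j => w j) := by
  rw [dist_eq_norm, ← map_sub]
  refine one_div_pow_le_norm_digitCode ((norm_sub_le _ _).trans_lt ?_) ?_
  · have := norm_natCast_le_of_mem_sphere hv
    have := norm_natCast_le_of_mem_sphere hw
    have : (2 * m : ℝ) < B := by exact_mod_cast hB
    linarith
  · rw [sub_ne_zero]
    exact fun h => hvw (funext fun j => by exact_mod_cast congrFun h j)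

theorem card_codedSphere {B d m : ℕ} (hB : 2 * m < B) (r : ℕ) :
    (codedSphere B d m r).card = (Behrend.sphere d m r).card := by
  refine Finset.card_image_of_injOn fun v hv w hw h => ?_
  by_contra hvw
  have hdist := one_div_pow_le_dist_digitCode hB hv hw hvw
  rw [dist_eq_zero.2 h] at hdist
  have : (0 : ℝ) < B := by exact_mod_cast (Nat.zero_le _).trans_lt hB
  exact hdist.not_gt (by positivity)

theorem pairwiseDisjoint_closedBall_codedSphere {B d m : ℕ} (hB : 2 * m < B) (r : ℕ) {ε : ℝ}
    (hε : 2 * ε < 1 / (B : ℝ) ^ d) :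
    (codedSphere B d m r : Set UnitAddCircle).PairwiseDisjoint (Metric.closedBall · ε) := by
  rintro x hx y hy hxy
  obtain ⟨v, hv, rfl⟩ := Finset.mem_image.1 hx
  obtain ⟨w, hw, rfl⟩ := Finset.mem_image.1 hy
  refine Metric.closedBall_disjoint_closedBall ?_
  have := one_div_pow_le_dist_digitCode hB hv hw (by rintro rfl; exact hxy rfl)
  linarith

theorem exists_isPolynomialRigid_codedSphere {ι : Type*} [Finite ι] {a : ι → ℤ}
    (ha : Function.Injective a) {k : ℕ} (hk : 2 * k < Nat.card ι) :
    ∃ M : ℕ, ∀ {B d m r : ℕ} {ε : ℝ}, M * m < B → M * ε < 1 / (B : ℝ) ^ d →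
      IsPolynomialRigid a k (codedSphere B d m r : Set UnitAddCircle) ε := by
  have := Fintype.ofFinite ι
  rw [Nat.card_eq_fintype_card] at hk
  obtain ⟨Γ, hΓ, hconst⟩ := exists_finset_annihilatesPolynomials_forall_sphere_eq ha hk
  refine ⟨∑ c ∈ Γ, ∑ i, (c i).natAbs, fun {B d m r ε} hB hε u z hz hclose i i' => ?_⟩
  choose v hv hvz using fun i => Finset.mem_image.1 (hz i)
  have hle : ∀ c ∈ Γ, ∑ i, (c i).natAbs ≤ ∑ c ∈ Γ, ∑ i, (c i).natAbs := fun c hc =>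
    Finset.single_le_sum (f := fun c : ι → ℤ => ∑ i, (c i).natAbs) (fun _ _ => Nat.zero_le _) hc
  have hε0 : 0 ≤ ε := (norm_nonneg _).trans (hclose i)
  have hzero : ∀ c ∈ Γ, ∑ i, c i • (fun j => (v i j : ℤ)) = 0 := fun c hc => by
    by_contra hne
    have hsmall : ‖∑ i, c i • (fun j => (v i j : ℤ))‖ < B := by
      refine (norm_sum_zsmul_le _ c fun i _ => norm_natCast_le_of_mem_sphere (hv i)).trans_lt ?_
      exact_mod_cast (Nat.mul_le_mul_right m (hle c hc)).trans_lt hB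
    -- The code of this vector is a combination of the errors, hence too close to `0`.
    have hcode : digitCode B d (∑ i, c i • (fun j => (v i j : ℤ))) =
        -∑ i, c i • (∑ l : Fin (k + 1), a i ^ (l : ℕ) • u l - z i) := by
      simp only [map_sum, map_zsmul, hvz, smul_sub, Finset.sum_sub_distrib,
        (hΓ c hc).sum_smul_eq_zero u, zero_sub, neg_neg]
    refine (one_div_pow_le_norm_digitCode hsmall hne).not_gt ?_
    rw [hcode, norm_neg]
    refine (norm_sum_zsmul_le _ c fun i _ => hclose i).trans_lt (lt_of_le_of_lt ?_ hε)
    gcongr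
    exact hle c hc
  have hvv : v i = v i' := funext fun j => by
    have := hconst (fun i j => (v i j : ℤ)) r hzero
      (fun i => by exact_mod_cast (Finset.mem_filter.1 (hv i)).2) i i'
    exact_mod_cast congrFun this j
  rw [← hvz i, ← hvz i', hvv]

theorem exists_sphere_card_mul_sq_lt {c : ℝ} (hc : 0 < c) (ℓ : ℕ) :
    ∃ m r : ℕ, 0 < m ∧ (Behrend.sphere (2 * ℓ + 1) m r).Nonempty ∧
      (Behrend.sphere (2 * ℓ + 1) m r).card * (c / m ^ (2 * ℓ + 1)) ^ 2 <
        ((Behrend.sphere (2 * ℓ + 1) m r).card * (c / m ^ (2 * ℓ + 1))) ^ ℓ := by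
  -- A large sphere has about `m ^ (d - 2)` points, so the right side is at least of order
  -- `m ^ (-2 * ℓ)`, while the left side is at most of order `m ^ (-d)`.
  set d := 2 * ℓ + 1 with hd
  obtain ⟨m, hm⟩ := exists_nat_gt (c ^ 2 / (c / d) ^ ℓ)
  have hd0 : (0 : ℝ) < d := by positivity
  have hm0 : (0 : ℝ) < m := lt_of_le_of_lt (by positivity) hm
  obtain ⟨r, hr⟩ := Behrend.exists_large_sphere d m
  push_cast at hr
  set N := (Behrend.sphere d m r).card
  have hN0 : (0 : ℝ) < N := lt_of_lt_of_le (by positivity) hr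
  have hN : (N : ℝ) ≤ m ^ d := by
    exact_mod_cast (Finset.card_le_card Behrend.sphere_subset_box).trans_eq (Behrend.card_box ..)
  refine ⟨m, r, by exact_mod_cast hm0, Finset.card_pos.1 (by exact_mod_cast hN0), ?_⟩
  calc (N : ℝ) * (c / m ^ d) ^ 2 ≤ m ^ d * (c / m ^ d) ^ 2 := by gcongr
    _ = c ^ 2 / m / m ^ (2 * ℓ) := by rw [hd, pow_succ (m : ℝ)]; field_simp
    _ < (c / d) ^ ℓ / m ^ (2 * ℓ) := by
      gcongr
      rwa [div_lt_comm₀ (by positivity) hm0] at hm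
    _ = (m ^ d / (d * m ^ 2) * (c / m ^ d)) ^ ℓ := by
      rw [pow_mul, ← div_pow]
      congr 1
      field_simp
    _ ≤ (N * (c / m ^ d)) ^ ℓ := by gcongr

theorem exists_isPolynomialRigid_finset {ι : Type*} [Finite ι] {a : ι → ℤ}
    (ha : Function.Injective a) {k : ℕ} (hk : 2 * k < Nat.card ι) (ℓ : ℕ) :
    ∃ (Z : Finset UnitAddCircle) (ε : ℝ), Z.Nonempty ∧ 0 < ε ∧ 2 * ε ≤ 1 ∧
      (Z : Set UnitAddCircle).PairwiseDisjoint (Metric.closedBall · ε) ∧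
      IsPolynomialRigid a k (Z : Set UnitAddCircle) ε ∧
      Z.card * (2 * ε) ^ 2 < (Z.card * (2 * ε)) ^ ℓ := by
  obtain ⟨M, hM⟩ := exists_isPolynomialRigid_codedSphere ha hk
  set C := M + 3 with hC
  set d := 2 * ℓ + 1
  have hC0 : (0 : ℝ) < C := by positivity
  obtain ⟨m, r, hm, hne, hlt⟩ :=
    exists_sphere_card_mul_sq_lt (c := 2 / C ^ (d + 1)) (by positivity) ℓ
  set ε : ℝ := 1 / (C * (C * m : ℕ) ^ d) with hε
  have hεlt : ∀ {t : ℝ}, t < C → t * ε < 1 / (C * m : ℕ) ^ d := fun {t} ht => by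
    have : (1 : ℝ) / (C * m : ℕ) ^ d = C * ε := by
      rw [hε]
      field_simp
    rw [this]
    gcongr
  have h2C : 2 * m < C * m := by gcongr; omega
  have hMC : M * m < C * m := by gcongr; omega
  have h2ε : 2 * ε < 1 / (C * m : ℕ) ^ d := hεlt (by rw [hC]; push_cast; linarith)
  have hcε : 2 / (C : ℝ) ^ (d + 1) / m ^ d = 2 * ε := by
    rw [hε, Nat.cast_mul, mul_pow, pow_succ (C : ℝ)]
    field_simp
  have hcard := card_codedSphere (d := d) h2C r
  refine ⟨codedSphere (C * m) d m r, ε, hne.image _, by positivity, ?_,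
    pairwiseDisjoint_closedBall_codedSphere h2C r h2ε,
    hM hMC (hεlt (by rw [hC]; push_cast; linarith)), ?_⟩
  · refine h2ε.le.trans (div_le_self zero_le_one ?_)
    exact one_le_pow₀ (by exact_mod_cast Nat.succ_le_of_lt (by positivity))
  · rw [hcard, ← hcε]
    exact hlt

end Coding

section Torus

noncomputable local instance : MeasureSpace UnitAddCircle := ⟨AddCircle.haarAddCircle⟩

local instance : Measure.IsAddHaarMeasure (volume : Measure UnitAddCircle) :=
  inferInstanceAs (Measure.IsAddHaarMeasure AddCircle.haarAddCircle)

local instance : IsProbabilityMeasure (volume : Measure UnitAddCircle) :=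
  inferInstanceAs (IsProbabilityMeasure AddCircle.haarAddCircle)

open UnitAddTorus

variable {d : Type*} [Fintype d]

theorem mFourier_apply_eq_toCircle (n : d → ℤ) (x : UnitAddTorus d) :
    mFourier n x = (AddCircle.toCircle (∑ i, n i • x i) : ℂ) := by
  simp only [mFourier, ContinuousMap.coe_mk, fourier_apply]
  exact (map_prod Circle.coeHom _ _).symm.trans
    (congrArg _ (map_sum AddCircle.toCircle_addChar.toAddMonoidHom _ _).symm)

theorem mFourierCoeff_memLp_toLp {f : UnitAddTorus d → ℂ} (hf : MemLp f 2) (n : d → ℤ) :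
    mFourierCoeff (hf.toLp f) n = mFourierCoeff f n :=
  integral_congr_ae (hf.coeFn_toLp.mono fun x hx => by simp only [hx])

theorem summable_sq_norm_mFourierCoeff {f : UnitAddTorus d → ℂ} (hf : MemLp f 2) :
    Summable fun n => ‖mFourierCoeff f n‖ ^ 2 := by
  simpa only [mFourierCoeff_memLp_toLp] using (hasSum_sq_mFourierCoeff (hf.toLp f)).summable

theorem ae_eq_mFourierCoeff_zero {f : UnitAddTorus d → ℂ} (hf : MemLp f 2)
    (h : ∀ n ≠ 0, mFourierCoeff f n = 0) : f =ᵐ[volume] fun _ => mFourierCoeff f 0 := by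
  have hseries : hf.toLp f = mFourierCoeff f 0 • mFourierLp 2 0 := by
    refine (hasSum_mFourier_series_L2 (hf.toLp f)).unique ?_
    rw [← mFourierCoeff_memLp_toLp hf]
    exact hasSum_single 0 fun n hn => by rw [mFourierCoeff_memLp_toLp, h n hn, zero_smul]
  have hconst := Lp.coeFn_smul (mFourierCoeff f 0) (mFourierLp (d := d) 2 0)
  rw [← hseries] at hconst
  filter_upwards [hf.coeFn_toLp, hconst, coeFn_mFourierLp (d := d) 2 0] with x hx hx1 hx2
  rw [← hx, hx1, Pi.smul_apply, hx2, mFourier_zero, ContinuousMap.one_apply, smul_eq_mul, mul_one]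

/-- The endomorphism of a torus given by an integer matrix. -/
def toralEnd (A : Matrix d d ℤ) : UnitAddTorus d →+ UnitAddTorus d where
  toFun x i := ∑ j, A i j • x j
  map_zero' := by funext i; simp
  map_add' x y := by funext i; simp [Finset.sum_add_distrib]

theorem toralEnd_apply (A : Matrix d d ℤ) (x : UnitAddTorus d) (i : d) :
    toralEnd A x i = ∑ j, A i j • x j := rfl

theorem toralEnd_mul_apply (A B : Matrix d d ℤ) (x : UnitAddTorus d) :
    toralEnd (A * B) x = toralEnd A (toralEnd B x) := by
  funext i
  simp only [toralEnd_apply, Matrix.mul_apply, Finset.smul_sum, Finset.sum_smul, smul_smul]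
  exact Finset.sum_comm

theorem continuous_toralEnd (A : Matrix d d ℤ) : Continuous (toralEnd A) :=
  continuous_pi fun i => by simp only [toralEnd_apply]; fun_prop

theorem mFourier_toralEnd (n : d → ℤ) (A : Matrix d d ℤ) (x : UnitAddTorus d) :
    mFourier n (toralEnd A x) = mFourier (Matrix.vecMul n A) x := by
  simp only [mFourier_apply_eq_toCircle, toralEnd_apply, Matrix.vecMul, dotProduct,
    Finset.smul_sum, Finset.sum_smul, smul_smul]
  rw [Finset.sum_comm]

theorem mFourier_apply_add (n : d → ℤ) (x y : UnitAddTorus d) :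
    mFourier n (x + y) = mFourier n x * mFourier n y := by
  simp only [mFourier_apply_eq_toCircle, Pi.add_apply, smul_add, Finset.sum_add_distrib,
    AddCircle.toCircle_add, Circle.coe_mul]

/-- The affine self-map `x ↦ A x + b` of a torus. -/
def toralAffine (A : Matrix d d ℤ) (b x : UnitAddTorus d) : UnitAddTorus d := toralEnd A x + b

variable [DecidableEq d] {A : Matrix d d ℤ}

theorem toralEnd_surjective (hA : A.det ≠ 0) : Function.Surjective (toralEnd A) := fun y => by
  refine ⟨toralEnd A.adjugate fun i => DivisibleBy.div (y i) A.det, funext fun i => ?_⟩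
  rw [← toralEnd_mul_apply, Matrix.mul_adjugate, toralEnd_apply,
    Finset.sum_eq_single i (by simp +contextual [eq_comm]) (by simp)]
  simpa using DivisibleBy.div_cancel (y i) hA

theorem measurePreserving_toralAffine (hA : A.det ≠ 0) (b : UnitAddTorus d) :
    MeasurePreserving (toralAffine A b) volume volume :=
  (measurePreserving_add_right volume b).comp
    ((toralEnd A).measurePreserving (continuous_toralEnd A) (toralEnd_surjective hA) rfl)

theorem mFourierCoeff_eq_of_comp_toralAffine_eq (hA : A.det ≠ 0) {b : UnitAddTorus d}
    {f : UnitAddTorus d → ℂ} (hf : AEStronglyMeasurable f volume)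
    (hinv : f ∘ toralAffine A b = f) (n : d → ℤ) :
    mFourierCoeff f n = mFourier (-n) b * mFourierCoeff f (Matrix.vecMul n A) := by
  have hT := measurePreserving_toralAffine hA b
  have hmeas : AEStronglyMeasurable (fun x => mFourier (-n) x • f x) volume :=
    (mFourier (-n)).continuous.aestronglyMeasurable.smul hf
  calc mFourierCoeff f n
      = ∫ x, mFourier (-n) (toralAffine A b x) • f (toralAffine A b x) := by
        rw [mFourierCoeff]
        nth_rw 1 [← hT.map_eq]
        exact integral_map hT.aemeasurable (hT.map_eq.symm ▸ hmeas)
    _ = ∫ x, mFourier (-n) b * (mFourier (-Matrix.vecMul n A) x • f x) := by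
        refine integral_congr_ae (.of_forall fun x => ?_)
        simp only [toralAffine, mFourier_apply_add, mFourier_toralEnd, Matrix.neg_vecMul,
          smul_eq_mul]
        rw [← mul_assoc, mul_comm (mFourier (-n) b)]
        congr 1
        exact congrFun hinv x
    _ = mFourier (-n) b * mFourierCoeff f (Matrix.vecMul n A) := integral_const_mul _ _

theorem norm_mFourierCoeff_vecMul_pow_of_comp_toralAffine_eq (hA : A.det ≠ 0)
    {b : UnitAddTorus d} {f : UnitAddTorus d → ℂ} (hf : AEStronglyMeasurable f volume)
    (hinv : f ∘ toralAffine A b = f) (n : d → ℤ) (m : ℕ) :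
    ‖mFourierCoeff f (Matrix.vecMul n (A ^ m))‖ = ‖mFourierCoeff f n‖ := by
  induction m with
  | zero => simp
  | succ m ih =>
    rw [← ih, mFourierCoeff_eq_of_comp_toralAffine_eq hA hf hinv (Matrix.vecMul n (A ^ m)),
      norm_mul, mFourier_apply_eq_toCircle, Circle.norm_coe, one_mul, Matrix.vecMul_vecMul,
      ← pow_succ]

theorem mFourierCoeff_eq_zero_of_injective_vecMul_pow (hA : A.det ≠ 0) {b : UnitAddTorus d}
    {f : UnitAddTorus d → ℂ} (hf : MemLp f 2) (hinv : f ∘ toralAffine A b = f) {n : d → ℤ}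
    (hn : Function.Injective fun m : ℕ => Matrix.vecMul n (A ^ m)) : mFourierCoeff f n = 0 := by
  -- The coefficients along the orbit of `n` have equal norms, and their squares are summable.
  have h := (summable_sq_norm_mFourierCoeff hf).comp_injective hn
  simpa only [Function.comp_def, summable_const_iff, sq_eq_zero_iff, norm_eq_zero,
    norm_mFourierCoeff_vecMul_pow_of_comp_toralAffine_eq hA hf.1 hinv] using h

theorem ergodic_toralAffine (hA : A.det ≠ 0) {b : UnitAddTorus d}
    (h : ∀ n : d → ℤ, n ≠ 0 → (Function.Injective fun m : ℕ => Matrix.vecMul n (A ^ m)) ∨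
      Matrix.vecMul n A = n ∧ mFourier n b ≠ 1) :
    Ergodic (toralAffine A b) volume := by
  refine ⟨measurePreserving_toralAffine hA b, ⟨fun s hs hinv => ?_⟩⟩
  set f : UnitAddTorus d → ℂ := s.indicator fun _ => 1
  have hf : MemLp f 2 := memLp_indicator_const 2 hs 1 (.inr (measure_ne_top _ _))
  have hfinv : f ∘ toralAffine A b = f := calc
    f ∘ toralAffine A b = (toralAffine A b ⁻¹' s).indicator fun _ => 1 := rfl
    _ = f := by rw [hinv]
  refine Filter.EventuallyConst.of_indicator_const (c := (1 : ℂ)) ?_ one_ne_zero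
  refine Filter.eventuallyConst_iff_exists_eventuallyEq.2
    ⟨_, ae_eq_mFourierCoeff_zero hf fun n hn => ?_⟩
  rcases h n hn with horbit | ⟨hfix, hb⟩
  · exact mFourierCoeff_eq_zero_of_injective_vecMul_pow hA hf hfinv horbit
  · have hcoeff := mFourierCoeff_eq_of_comp_toralAffine_eq hA hf.1 hfinv n
    rw [hfix, mFourier_neg, eq_comm] at hcoeff
    by_contra hne
    exact hb (by simpa using congrArg (starRingEnd ℂ) ((mul_eq_right₀ hne).1 hcoeff))

theorem volume_closedBall_unitAddCircle (x : UnitAddCircle) {ε : ℝ} (hε : 2 * ε ≤ 1) :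
    volume (Metric.closedBall x ε) = ENNReal.ofReal (2 * ε) := by
  have h := AddCircle.volume_closedBall 1 (x := x) ε
  rw [min_eq_right hε, AddCircle.volume_eq_smul_haarAddCircle, Measure.smul_apply,
    ENNReal.ofReal_one, one_smul] at h
  exact h

/-- The skew product `(x, y) ↦ (x + 2β, y + x + β)` on the two-dimensional torus. Its constants
make the second coordinate of the `n`-th iterate the quadratic `y + n x + n² β`. -/
def skewProduct (β : UnitAddCircle) : UnitAddTorus (Fin 2) → UnitAddTorus (Fin 2) :=
  toralAffine !![1, 0; 1, 1] ![2 • β, β]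

theorem skewProduct_apply (β : UnitAddCircle) (x : UnitAddTorus (Fin 2)) :
    skewProduct β x = ![x 0 + 2 • β, x 1 + x 0 + β] := by
  funext i
  rw [skewProduct, toralAffine, Pi.add_apply, toralEnd_apply, Fin.sum_univ_two]
  fin_cases i <;> simp [add_comm]

theorem skewProduct_iterate (β : UnitAddCircle) (n : ℕ) (x : UnitAddTorus (Fin 2)) :
    (skewProduct β)^[n] x = ![x 0 + (2 * n) • β, x 1 + n • x 0 + n ^ 2 • β] := by
  induction n with
  | zero => funext i; fin_cases i <;> simp
  | succ n ih =>
    rw [Function.iterate_succ_apply', ih, skewProduct_apply]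
    funext i
    fin_cases i <;> simp only [Fin.zero_eta, Fin.mk_one, Matrix.cons_val] <;> module

theorem vecMul_shear_pow (n : Fin 2 → ℤ) (m : ℕ) :
    Matrix.vecMul n (!![1, 0; 1, 1] ^ m) = ![n 0 + m * n 1, n 1] := by
  induction m with
  | zero => funext i; fin_cases i <;> simp
  | succ m ih =>
    rw [pow_succ, ← Matrix.vecMul_vecMul, ih]
    refine funext (Fin.forall_fin_two.2 ⟨?_, ?_⟩)
    · simp only [Matrix.vecMul, dotProduct, Fin.sum_univ_two, Matrix.of_apply, Matrix.cons_val]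
      push_cast
      ring
    · simp [Matrix.vecMul, dotProduct]

theorem ergodic_skewProduct {β : ℝ} (hβ : Irrational β) :
    Ergodic (skewProduct (β : UnitAddCircle)) volume := by
  refine ergodic_toralAffine (by simp) fun n hn => ?_
  by_cases h1 : n 1 = 0
  · have h0 : n 0 ≠ 0 := fun h0 => hn (funext (Fin.forall_fin_two.2 ⟨h0, h1⟩))
    refine .inr ⟨?_, fun h => ?_⟩
    · have := vecMul_shear_pow n 1
      rw [pow_one] at this
      rw [this]
      funext i
      fin_cases i <;> simp [h1]
    · rw [mFourier_apply_eq_toCircle, Fin.sum_univ_two, Circle.coe_eq_one,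
        ← AddCircle.toCircle_zero, (AddCircle.injective_toCircle one_ne_zero).eq_iff] at h
      simp only [Matrix.cons_val, h1, zero_smul, add_zero] at h
      rw [← AddCircle.coe_nsmul, ← AddCircle.coe_zsmul, AddCircle.coe_eq_zero_iff] at h
      obtain ⟨m, hm⟩ := h
      simp only [zsmul_eq_mul, nsmul_eq_mul, mul_one] at hm
      refine (hβ.intCast_mul (m := n 0 * 2) (by simpa using h0)) ⟨m, ?_⟩
      push_cast at hm ⊢
      linarith
  · refine .inl fun m m' h => ?_
    simpa [vecMul_shear_pow, h1] using congrFun h 0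

theorem measurePreserving_iterate_skewProduct_pair (β : UnitAddCircle) {p q : ℕ} (hpq : p ≠ q) :
    MeasurePreserving (fun x => (![(skewProduct β)^[p] x 1, (skewProduct β)^[q] x 1] :
      UnitAddTorus (Fin 2))) volume volume := by
  have hdet : (!![(p : ℤ), 1; (q : ℤ), 1]).det ≠ 0 := by
    rw [Matrix.det_fin_two_of, mul_one, one_mul, sub_ne_zero]
    exact_mod_cast hpq
  convert measurePreserving_toralAffine hdet ![p ^ 2 • β, q ^ 2 • β] using 1
  funext x i
  rw [toralAffine, Pi.add_apply, toralEnd_apply, Fin.sum_univ_two]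
  fin_cases i <;> simp [skewProduct_iterate, add_comm]

/-- The set of points of the two-dimensional torus whose second coordinate is within `ε` of `Z`. -/
def closedStrip (Z : Finset UnitAddCircle) (ε : ℝ) : Set (UnitAddTorus (Fin 2)) :=
  ⋃ z ∈ Z, (fun x => x 1) ⁻¹' Metric.closedBall z ε

theorem mem_closedStrip {Z : Finset UnitAddCircle} {ε : ℝ} {x : UnitAddTorus (Fin 2)} :
    x ∈ closedStrip Z ε ↔ ∃ z ∈ Z, ‖x 1 - z‖ ≤ ε := by
  simp [closedStrip, dist_eq_norm]

theorem measurableSet_closedStrip (Z : Finset UnitAddCircle) (ε : ℝ) :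
    MeasurableSet (closedStrip Z ε) :=
  Finset.measurableSet_biUnion _ fun _ _ => measurable_pi_apply 1 measurableSet_closedBall

theorem volume_closedStrip {Z : Finset UnitAddCircle} {ε : ℝ} (hε : 2 * ε ≤ 1)
    (hZ : (Z : Set UnitAddCircle).PairwiseDisjoint (Metric.closedBall · ε)) :
    volume (closedStrip Z ε) = Z.card * ENNReal.ofReal (2 * ε) := by
  have heval := measurePreserving_eval (fun _ : Fin 2 => (volume : Measure UnitAddCircle)) 1
  rw [closedStrip, measure_biUnion_finset
    (fun z hz w hw hzw => (hZ hz hw hzw).preimage fun x : UnitAddTorus (Fin 2) => x 1)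
    fun _ _ => heval.measurable measurableSet_closedBall, ← nsmul_eq_mul]
  refine Finset.sum_eq_card_nsmul fun z _ => ?_
  rw [← volume_closedBall_unitAddCircle z hε]
  exact heval.measure_preimage measurableSet_closedBall.nullMeasurableSet

variable {ι : Type*} {a : ι → ℕ} {Z : Finset UnitAddCircle} {ε : ℝ}

theorem iInter_preimage_closedStrip_subset
    (hZ : IsPolynomialRigid (fun i => (a i : ℤ)) 2 (Z : Set UnitAddCircle) ε)
    (β : UnitAddCircle) (n : ℕ) (i j : ι) :
    ⋂ i, (skewProduct β)^[a i * n] ⁻¹' closedStrip Z ε ⊆ ⋃ z ∈ Z,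
      (fun x => ![(skewProduct β)^[a i * n] x 1, (skewProduct β)^[a j * n] x 1]) ⁻¹'
        Set.univ.pi fun _ => Metric.closedBall z ε := fun x hx => by
  simp only [Set.mem_iInter, Set.mem_preimage, mem_closedStrip] at hx
  choose z hz hxz using hx
  have hquad : ∀ i, (skewProduct β)^[a i * n] x 1 =
      ∑ l : Fin 3, (a i : ℤ) ^ (l : ℕ) • ![x 1, n • x 0, n ^ 2 • β] l := fun i => by
    rw [skewProduct_iterate, Fin.sum_univ_three]
    simp only [Matrix.cons_val, Fin.coe_ofNat_eq_mod]
    module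
  have hconst := hZ _ z hz fun i => by
    rw [← hquad]
    exact hxz i
  simp only [Set.mem_iUnion]
  refine ⟨z i, hz i, fun s _ => ?_⟩
  rw [Metric.mem_closedBall, dist_eq_norm]
  fin_cases s
  · exact hxz i
  · exact hconst j i ▸ hxz j

theorem volume_iInter_preimage_closedStrip_le [Nontrivial ι] (ha : Function.Injective a)
    (hε : 2 * ε ≤ 1)
    (hZ : IsPolynomialRigid (fun i => (a i : ℤ)) 2 (Z : Set UnitAddCircle) ε)
    (β : UnitAddCircle) {n : ℕ} (hn : n ≠ 0) :
    volume (⋂ i, (skewProduct β)^[a i * n] ⁻¹' closedStrip Z ε) ≤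
      Z.card * ENNReal.ofReal (2 * ε) ^ 2 := by
  obtain ⟨i, j, hij⟩ := exists_pair_ne ι
  have hpair := measurePreserving_iterate_skewProduct_pair β
    ((mul_left_injective₀ hn).ne (ha.ne hij))
  refine (measure_mono (iInter_preimage_closedStrip_subset hZ β n i j)).trans
    ((measure_biUnion_finset_le _ _).trans_eq ?_)
  rw [← nsmul_eq_mul]
  refine Finset.sum_eq_card_nsmul fun z _ => ?_
  rw [hpair.measure_preimage
    (MeasurableSet.univ_pi fun _ => measurableSet_closedBall).nullMeasurableSet, volume_pi_pi]
  simp [volume_closedBall_unitAddCircle z hε]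

theorem exists_volume_iInter_preimage_skewProduct_lt (ha : Function.Injective a)
    (hι : 4 < Nat.card ι) (β : UnitAddCircle) (ℓ : ℕ) :
    ∃ A : Set (UnitAddTorus (Fin 2)), MeasurableSet A ∧ 0 < volume A ∧
      ∀ n : ℕ, n ≠ 0 → volume (⋂ i, (skewProduct β)^[a i * n] ⁻¹' A) < volume A ^ ℓ := by
  have : Finite ι := Nat.finite_of_card_ne_zero (by omega)
  have : Nontrivial ι := Finite.one_lt_card_iff_nontrivial.1 (by omega)
  have ha' : Function.Injective fun i => (a i : ℤ) := Nat.cast_injective.comp ha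
  obtain ⟨Z, ε, hne, hε0, hε, hdisj, hrigid, hlt⟩ :=
    exists_isPolynomialRigid_finset ha' (k := 2) hι ℓ
  refine ⟨closedStrip Z ε, measurableSet_closedStrip Z ε, ?_, fun n hn =>
    (volume_iInter_preimage_closedStrip_le ha hε hrigid β hn).trans_lt ?_⟩
  · rw [volume_closedStrip hε hdisj]
    exact ENNReal.mul_pos (by simpa using hne.ne_empty) (by simpa using hε0)
  · rw [volume_closedStrip hε hdisj, ← ENNReal.ofReal_natCast,
      ← ENNReal.ofReal_pow (by positivity), ← ENNReal.ofReal_mul (by positivity),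
      ← ENNReal.ofReal_mul (by positivity), ← ENNReal.ofReal_pow (by positivity)]
    exact (ENNReal.ofReal_lt_ofReal_iff (by positivity)).2 hlt

theorem no_optimal_recurrence_five_terms_general :
    ∃ (X : Type) (_ : MeasurableSpace X) (μ : Measure X) (T : X → X),
      IsProbabilityMeasure μ ∧ Ergodic T μ ∧
      ∀ {ι : Type*} (a : ι → ℕ), Function.Injective a → 5 ≤ Nat.card ι →
        ∀ ℓ : ℕ, ∃ A : Set X, MeasurableSet A ∧ 0 < μ A ∧
          ∀ n : ℕ, n ≠ 0 → μ (⋂ i, T^[a i * n] ⁻¹' A) < μ A ^ ℓ :=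
  ⟨UnitAddTorus (Fin 2), inferInstance, volume, skewProduct (√2 : ℝ), inferInstance,
    ergodic_skewProduct irrational_sqrt_two, fun _ ha hι ℓ =>
      exists_volume_iInter_preimage_skewProduct_lt ha hι _ ℓ⟩

end Torus

theorem no_optimal_recurrence_five_terms (a : Fin 5 → ℕ) (ha : StrictMono a) :
    ∃ (X : Type) (_ : MeasurableSpace X) (μ : Measure X) (T : X → X),
      IsProbabilityMeasure μ ∧ Ergodic T μ ∧
      ∀ ℓ : ℕ, 0 < ℓ → ∃ A : Set X, MeasurableSet A ∧ 0 < μ A ∧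
        ∀ n : ℕ, n ≠ 0 →
          μ (⋂ i : Fin 5, T^[a i * n] ⁻¹' A) < μ A ^ ℓ := by
  obtain ⟨X, hX, μ, T, hμ, hT, h⟩ := no_optimal_recurrence_five_terms_general
  exact ⟨X, hX, μ, T, hμ, hT, fun ℓ _ => h a ha.injective (by simp) ℓ⟩
end

section
/- There exists a measure space (X, ℬ, μ) with two commuting invertible measure preserving transformations T₁, T₂ (T₁T₂ = T₂T₁), with T₁ ergodic, such that for every integer ℓ > 0 there exists A ∈ ℬ with μ(A) > 0 satisfying μ(A ∩ T₁^{−n}A ∩ T₁^{−2n}A ∩ T₂^{−n²}A) < μ(A)^ℓ for every n ∈ ℕ with n ≠ 0. -/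
open MeasureTheory

/-!
On the torus of pairs `(x, y)`, let `T₁` be the skew rotation `(x, y) ↦ (x + α, y + 2x + α)` with
`α` irrational and `T₂` the translation `(x, y) ↦ (x, y - 2α)`. The second coordinates of
`T₂^{n²}`, `T₁ⁿ`, `T₁²ⁿ` applied to `(x, y)` are `y - 2n²α`, `y + 2nx + n²α`, `y + 4nx + 4n²α`, an
arithmetic progression with difference `2nx + 3n²α`. For `n ≠ 0` its first term and difference are
independent and uniformly distributed, so for `A = {(x, y) | y ∈ B}` the multiple intersection has
measure at most the density of three-term progressions in `B`. Taking for `B` a union of small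
intervals around a Behrend set in `ℤ/M ⊆ ℝ/ℤ` leaves only the progressions inside a single
interval, and these have density below any fixed power of the measure of `B`.

`T₁` is ergodic because its Koopman operator maps the character `(m, k)` to a multiple of
`(m + 2k, k)`: if `k ≠ 0` the orbit is infinite, so by Bessel's inequality the corresponding
coefficient of an invariant function vanishes; if `k = 0 ≠ m` the multiple is not `1`.
-/

open AddCircle Filter Metric UnitAddTorus
open scoped ComplexConjugate

section InvariantVectors

variable {𝕜 E ι : Type*} [RCLike 𝕜] [NormedAddCommGroup E] [InnerProductSpace 𝕜 E]
  {v : ι → E} {U : E →ₗᵢ[𝕜] E} {σ : ι → ι} {c : ι → 𝕜} {x : E}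

lemma inner_eq_conj_mul_inner_of_apply_eq_self (hU : ∀ i, U (v i) = c i • v (σ i)) (hx : U x = x)
    (i : ι) : inner 𝕜 (v i) x = conj (c i) * inner 𝕜 (v (σ i)) x := by
  rw [← U.inner_map_map, hU, hx, inner_smul_left]

lemma inner_eq_zero_of_fixed_index (hU : ∀ i, U (v i) = c i • v (σ i)) (hx : U x = x) {i : ι}
    (hi : σ i = i) (hc : c i ≠ 1) : inner 𝕜 (v i) x = 0 := by
  have h := inner_eq_conj_mul_inner_of_apply_eq_self hU hx i
  rw [hi] at h
  by_contra h0
  exact hc ((map_eq_one_iff _ (starRingEnd 𝕜).injective).1 ((mul_eq_right₀ h0).1 h.symm))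

lemma norm_inner_iterate_of_apply_eq_self (hv : Orthonormal 𝕜 v)
    (hU : ∀ i, U (v i) = c i • v (σ i)) (hx : U x = x) (i : ι) (k : ℕ) :
    ‖inner 𝕜 (v (σ^[k] i)) x‖ = ‖inner 𝕜 (v i) x‖ := by
  have hc (j : ι) : ‖c j‖ = 1 := by
    simpa [norm_smul, hv.norm_eq_one] using (congrArg norm (hU j)).symm
  induction k with
  | zero => rfl
  | succ k ih =>
    rw [← ih, inner_eq_conj_mul_inner_of_apply_eq_self hU hx (σ^[k] i), norm_mul, RCLike.norm_conj,
      hc, one_mul, Function.iterate_succ_apply']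

lemma inner_eq_zero_of_injective_iterate (hv : Orthonormal 𝕜 v)
    (hU : ∀ i, U (v i) = c i • v (σ i)) (hx : U x = x) {i : ι}
    (hi : Function.Injective fun k : ℕ => σ^[k] i) : inner 𝕜 (v i) x = 0 := by
  have hsum := ((hv.inner_products_summable (x := x)).comp_injective hi).tendsto_atTop_zero
  simp only [Function.comp_def, norm_inner_iterate_of_apply_eq_self hv hU hx] at hsum
  simpa using tendsto_nhds_unique tendsto_const_nhds hsum

lemma inner_smul_eq_self_of_forall_inner_eq_zero (b : HilbertBasis ι 𝕜 E) {i₀ : ι}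
    (h : ∀ i ≠ i₀, inner 𝕜 (b i) x = 0) : inner 𝕜 (b i₀) x • b i₀ = x := by
  rw [← b.repr_apply_apply]
  refine (hasSum_single i₀ fun i hi => ?_).unique (b.hasSum_repr x)
  rw [b.repr_apply_apply, h i hi, zero_smul]

end InvariantVectors

section Ergodic

variable {X ι : Type*} [MeasurableSpace X] {μ : Measure X} {T : X → X}

theorem ergodic_of_forall_Lp_eventuallyConst {E : Type*} [NormedAddCommGroup E] [Nontrivial E]
    {p : ENNReal} [IsFiniteMeasure μ] (hT : MeasurePreserving T μ μ)
    (h : ∀ f : Lp E p μ, Lp.compMeasurePreserving T hT f = f → EventuallyConst f (ae μ)) :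
    Ergodic T μ where
  toMeasurePreserving := hT
  aeconst_set s hs hinv := by
    obtain ⟨e, he⟩ := exists_ne (0 : E)
    have hf := h (indicatorConstLp p hs (measure_ne_top μ s) e) <| by
      simp only [Lp.indicatorConstLp_compMeasurePreserving, hinv]
    exact (hf.congr indicatorConstLp_coeFn).of_indicator_const he

theorem ergodic_of_hilbertBasis {𝕜 : Type*} [RCLike 𝕜] [IsFiniteMeasure μ]
    (hT : MeasurePreserving T μ μ)
    (b : HilbertBasis ι 𝕜 (Lp 𝕜 2 μ)) {i₀ : ι} (hi₀ : EventuallyConst (b i₀) (ae μ))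
    {σ : ι → ι} {c : ι → 𝕜} (hbT : ∀ i, b i ∘ T =ᵐ[μ] c i • b (σ i))
    (hσ : ∀ i ≠ i₀, σ i = i ∧ c i ≠ 1 ∨ Function.Injective fun k : ℕ => σ^[k] i) :
    Ergodic T μ := by
  refine ergodic_of_forall_Lp_eventuallyConst (E := 𝕜) (p := 2) hT fun f hf => ?_
  have hU (i : ι) : Lp.compMeasurePreservingₗᵢ 𝕜 T hT (b i) = c i • b (σ i) :=
    Lp.ext <| (Lp.coeFn_compMeasurePreserving _ hT).trans <|
      (hbT i).trans (Lp.coeFn_smul _ _).symm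
  have hzero (i : ι) (hi : i ≠ i₀) : inner 𝕜 (b i) f = 0 := by
    rcases hσ i hi with ⟨hfix, hc⟩ | hinj
    · exact inner_eq_zero_of_fixed_index hU hf hfix hc
    · exact inner_eq_zero_of_injective_iterate b.orthonormal hU hf hinj
  rw [← inner_smul_eq_self_of_forall_inner_eq_zero b hzero]
  exact (hi₀.comp _).congr (Lp.coeFn_smul _ _).symm

theorem ergodic_of_mFourier_comp {d : Type*} [Fintype d] {T : UnitAddTorus d → UnitAddTorus d}
    (hT : MeasurePreserving T (Measure.pi fun _ => haarAddCircle)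
      (Measure.pi fun _ => haarAddCircle))
    {σ : (d → ℤ) → d → ℤ} {c : (d → ℤ) → ℂ}
    (hmT : ∀ n x, mFourier n (T x) = c n * mFourier (σ n) x)
    (hσ : ∀ n ≠ 0, σ n = n ∧ c n ≠ 1 ∨ Function.Injective fun k : ℕ => σ^[k] n) :
    Ergodic T (Measure.pi fun _ => haarAddCircle) := by
  have hb (n : d → ℤ) :
      mFourierBasis n =ᵐ[Measure.pi fun _ : d => haarAddCircle] mFourier n := by
    simpa using! coeFn_mFourierLp 2 n
  refine ergodic_of_hilbertBasis hT mFourierBasis (i₀ := 0) ?_ (fun n => ?_) hσ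
  · refine EventuallyConst.congr ?_ (hb 0).symm
    rw [mFourier_zero]
    exact .const 1
  · filter_upwards [hT.quasiMeasurePreserving.ae_eq_comp (hb n), hb (σ n)] with x hx hσx
    rw [hx, Pi.smul_apply, hσx, smul_eq_mul]
    exact hmT n x

end Ergodic

lemma measurePreserving_of_map_add {G H : Type*} [AddCommGroup G] [TopologicalSpace G]
    [IsTopologicalAddGroup G] [MeasurableSpace G] [BorelSpace G] [AddCommGroup H]
    [TopologicalSpace H] [IsTopologicalAddGroup H] [CompactSpace H]
    [MeasurableSpace H] [BorelSpace H]
    {μ : Measure G} [μ.IsAddHaarMeasure] {ν : Measure H} [ν.IsAddHaarMeasure]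
    (huniv : μ Set.univ = ν Set.univ) {f : G → H} (hf : Continuous f)
    (hsurj : Function.Surjective f) (hadd : ∀ x y, f (x + y) = f x + f y - f 0) :
    MeasurePreserving f μ ν := by
  let L : G →+ H := .mk' (fun x => f x - f 0) fun x y => by rw [hadd]; abel
  have hL : MeasurePreserving L μ ν := L.measurePreserving (hf.sub continuous_const)
    (fun y => (hsurj (y + f 0)).imp fun x hx => sub_eq_of_eq_add hx) huniv
  simpa [L, Function.comp_def] using (measurePreserving_add_right ν (f 0)).comp hL

section SkewRotation

variable {G : Type*} [AddCommGroup G] [TopologicalSpace G] [IsTopologicalAddGroup G]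

/-- The skew rotation `(x, y) ↦ (x + α, y + 2x + α)` of `G²`, with pairs encoded as functions on
`Fin 2`. The term `2x + α` is chosen so that the second coordinate moves by `2nx + n²α` in `n`
steps. -/
def skewRotation (α : G) : (Fin 2 → G) ≃ₜ (Fin 2 → G) where
  toFun x := ![x 0 + α, x 1 + (2 • x 0 + α)]
  invFun x := ![x 0 - α, x 1 - (2 • (x 0 - α) + α)]
  left_inv x := by ext i; fin_cases i <;> simp
  right_inv x := by ext i; fin_cases i <;> simp
  continuous_toFun := by fun_prop
  continuous_invFun := by fun_prop

lemma skewRotation_apply (α : G) (x : Fin 2 → G) :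
    skewRotation α x = ![x 0 + α, x 1 + (2 • x 0 + α)] := rfl

lemma skewRotation_iterate (α : G) (n : ℕ) (x : Fin 2 → G) :
    (skewRotation α)^[n] x = ![x 0 + n • α, x 1 + ((2 * n) • x 0 + n ^ 2 • α)] := by
  induction n with
  | zero => ext i; fin_cases i <;> simp
  | succ n ih =>
    rw [Function.iterate_succ_apply', ih, skewRotation_apply]
    ext i
    fin_cases i
    · simp [succ_nsmul, add_assoc]
    · simp only [Fin.mk_one, Matrix.cons_val_zero, Matrix.cons_val_one, smul_add]
      module

lemma skewRotation_comp_add_right (α b : G) :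
    skewRotation α ∘ (· + ![0, b]) = (· + ![0, b]) ∘ skewRotation α := by
  ext x i
  fin_cases i
  · change x 0 + 0 + α = x 0 + α + 0
    abel
  · change x 1 + b + (2 • (x 0 + 0) + α) = x 1 + (2 • x 0 + α) + b
    abel

lemma measurePreserving_skewRotation [CompactSpace G] [SecondCountableTopology G]
    [MeasurableSpace G] [BorelSpace G] {μ : Measure G} [μ.IsAddHaarMeasure] (α : G) :
    MeasurePreserving (skewRotation α) (Measure.pi fun _ => μ) (Measure.pi fun _ => μ) := by
  refine measurePreserving_of_map_add rfl (skewRotation α).continuous (skewRotation α).surjective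
    fun x y => ?_
  ext i
  fin_cases i
  · change x 0 + y 0 + α = x 0 + α + (y 0 + α) - (0 + α)
    abel
  · change x 1 + y 1 + (2 • (x 0 + y 0) + α) =
      x 1 + (2 • x 0 + α) + (y 1 + (2 • y 0 + α)) - (0 + (2 • 0 + α))
    abel

end SkewRotation

lemma not_isOfFinAddOrder_coe_of_irrational {a : ℝ} (ha : Irrational a) :
    ¬IsOfFinAddOrder (a : UnitAddCircle) := by
  rw [not_isOfFinAddOrder_iff_forall_rat_ne_div]
  exact fun q hq => ha ⟨q, by simpa using hq⟩

lemma fourier_apply_eq_one_iff {T : ℝ} [hT : Fact (0 < T)] {α : AddCircle T}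
    (hα : ¬IsOfFinAddOrder α) (n : ℤ) : fourier n α = 1 ↔ n = 0 := by
  refine ⟨fun h => ?_, fun h => by simp [h]⟩
  by_contra hn
  have hnα : n • α = 0 :=
    injective_toCircle hT.out.ne' (Circle.ext (by simpa using h))
  exact hα (isOfFinAddOrder_iff_zsmul_eq_zero.2 ⟨n, hn, hnα⟩)

lemma mFourier_skewRotation (α : UnitAddCircle) (n : Fin 2 → ℤ) (x : UnitAddTorus (Fin 2)) :
    mFourier n (skewRotation α x) =
      fourier (n 0 + n 1) α * mFourier ![n 0 + 2 * n 1, n 1] x := by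
  simp only [mFourier, ContinuousMap.coe_mk, Fin.prod_univ_two, skewRotation_apply,
    Matrix.cons_val_zero, Matrix.cons_val_one, fourier_add]
  simp only [fourier_apply, smul_add, toCircle_add, Circle.coe_mul, mul_comm 2 (n 1), mul_smul,
    ofNat_zsmul]
  ring

lemma iterate_shear_fin_two (n : Fin 2 → ℤ) (k : ℕ) :
    (fun n : Fin 2 → ℤ => ![n 0 + 2 * n 1, n 1])^[k] n = ![n 0 + k * (2 * n 1), n 1] := by
  induction k with
  | zero => ext i; fin_cases i <;> simp
  | succ k ih =>
    rw [Function.iterate_succ_apply', ih]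
    ext i
    fin_cases i
    · simp only [Fin.zero_eta, Matrix.cons_val_zero, Matrix.cons_val_one, Nat.cast_succ]
      ring
    · simp

theorem ergodic_skewRotation {α : UnitAddCircle} (hα : ¬IsOfFinAddOrder α) :
    Ergodic (skewRotation α) (Measure.pi fun _ => haarAddCircle) := by
  refine ergodic_of_mFourier_comp (measurePreserving_skewRotation α) (mFourier_skewRotation α)
    fun n hn => ?_
  by_cases h1 : n 1 = 0
  · have h0 : n 0 ≠ 0 := fun h0 => hn (funext (Fin.forall_fin_two.2 ⟨h0, h1⟩))
    refine .inl ⟨?_, ?_⟩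
    · ext i; fin_cases i <;> simp [h1]
    · rwa [h1, add_zero, Ne, fourier_apply_eq_one_iff hα]
  · refine .inr fun k l hkl => ?_
    simpa [iterate_shear_fin_two, h1] using congrFun hkl 0

section ThreeAP

/-- The set of pairs `(z, d)` for which `z`, `z + d`, `z + 2d` all belong to `B`: the three-term
arithmetic progressions in `B`, encoded by first term and common difference. -/
def threeAPSet {G : Type*} [AddCommMonoid G] (B : Set G) : Set (G × G) :=
  {p | p.1 ∈ B ∧ p.1 + p.2 ∈ B ∧ p.1 + 2 • p.2 ∈ B}

lemma measurableSet_threeAPSet {G : Type*} [AddCommMonoid G] [MeasurableSpace G] [MeasurableAdd₂ G]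
    {B : Set G} (hB : MeasurableSet B) : MeasurableSet (threeAPSet B) :=
  (measurable_fst hB).inter <| (measurable_add hB).inter <|
    (show Measurable fun p : G × G => p.1 + 2 • p.2 by fun_prop) hB

variable {G : Type*} [AddCommGroup G] [TopologicalSpace G] [IsTopologicalAddGroup G]
  [CompactSpace G] [MeasurableSpace G] [BorelSpace G] [DivisibleBy G ℤ]
  {μ : Measure G} [μ.IsAddHaarMeasure]

lemma measurePreserving_prodMk_add_zsmul_add {m : ℤ} (hm : m ≠ 0) (a b : G) :
    MeasurePreserving (fun x : Fin 2 → G => (x 1 + a, m • x 0 + b))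
      (Measure.pi fun _ => μ) (μ.prod μ) :=
  (((measurePreserving_add_right μ a).prod
    ((measurePreserving_add_right μ b).comp (Measure.measurePreserving_zsmul μ hm))).comp
      Measure.measurePreserving_swap).comp (measurePreserving_finTwoArrow μ)

theorem measure_inter_skewRotation_preimage_le [SecondCountableTopology G] (α : G) {B : Set G}
    (hB : MeasurableSet B) {n : ℕ} (hn : n ≠ 0) :
    Measure.pi (fun _ : Fin 2 => μ) ({x | x 1 ∈ B} ∩ (skewRotation α)^[n] ⁻¹' {x | x 1 ∈ B} ∩
        (skewRotation α)^[2 * n] ⁻¹' {x | x 1 ∈ B} ∩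
        (· + ![0, -(2 • α)])^[n ^ 2] ⁻¹' {x | x 1 ∈ B}) ≤
      (μ.prod μ) (threeAPSet B) := by
  rw [← (measurePreserving_prodMk_add_zsmul_add (m := 2 * n) (by positivity)
    (-((2 * n ^ 2) • α)) ((3 * n ^ 2) • α)).measure_preimage
      (measurableSet_threeAPSet hB).nullMeasurableSet]
  refine measure_mono fun x ⟨⟨⟨_, h₁⟩, h₂⟩, h₃⟩ => ?_
  rw [Set.mem_preimage, skewRotation_iterate, Set.mem_ofPred] at h₁ h₂
  rw [Set.mem_preimage, add_right_iterate, Set.mem_ofPred] at h₃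
  refine ⟨?_, ?_, ?_⟩
  · convert h₃ using 1
    simp only [Pi.add_apply, Pi.smul_apply, Matrix.cons_val_one, Matrix.cons_val_fin_one]
    module
  · convert h₁ using 1
    simp only [Matrix.cons_val_one, Matrix.cons_val_fin_one]
    module
  · convert h₂ using 1
    simp only [Matrix.cons_val_one, Matrix.cons_val_fin_one]
    module

end ThreeAP

section Thickening

variable {G : Type*} [NormedAddCommGroup G] {S : Finset G} {H : AddSubgroup G} {ε : ℝ}

lemma cthickening_finset_eq_biUnion (S : Finset G) (hε : 0 ≤ ε) :
    cthickening ε (S : Set G) = ⋃ s ∈ S, closedBall s ε := by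
  simpa using S.finite_toSet.isCompact.cthickening_eq_biUnion_closedBall hε

lemma threeAPSet_cthickening_subset (hS : ThreeAPFree (S : Set G)) (hSH : (S : Set G) ⊆ H)
    (hH : ∀ h ∈ H, ‖h‖ ≤ 4 * ε → h = 0) (hε : 0 ≤ ε) :
    threeAPSet (cthickening ε (S : Set G)) ⊆
      ⋃ s ∈ S, (fun p : G × G => (p.1, p.1 + p.2)) ⁻¹' closedBall s ε ×ˢ closedBall s ε := by
  rintro ⟨z, d⟩ ⟨hz, hzd, hzdd⟩
  simp only [cthickening_finset_eq_biUnion S hε, Set.mem_iUnion₂, exists_prop] at hz hzd hzdd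
  obtain ⟨a, ha, hza⟩ := hz
  obtain ⟨b, hb, hzb⟩ := hzd
  obtain ⟨c, hc, hzc⟩ := hzdd
  have hnorm : ‖a + c - (b + b)‖ ≤ 4 * ε := by
    rw [mem_closedBall_iff_norm] at hza hzb hzc
    calc ‖a + c - (b + b)‖
        = ‖((z + d - b) + (z + d - b)) - ((z - a) + (z + 2 • d - c))‖ := by congr 1; abel
      _ ≤ (ε + ε) + (ε + ε) :=
        norm_sub_le_of_le (norm_add_le_of_le hzb hzb) (norm_add_le_of_le hza hzc)
      _ = 4 * ε := by ring
  have hab : a = b := hS ha hb hc <| sub_eq_zero.1 <| hH _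
    (H.sub_mem (H.add_mem (hSH ha) (hSH hc)) (H.add_mem (hSH hb) (hSH hb))) hnorm
  subst hab
  exact Set.mem_iUnion₂.2 ⟨a, ha, hza, hzb⟩

lemma pairwiseDisjoint_closedBall_of_subset_addSubgroup {s : Set G} (hs : s ⊆ H)
    (hH : ∀ h ∈ H, ‖h‖ ≤ 2 * ε → h = 0) : s.PairwiseDisjoint fun x => closedBall x ε := by
  intro x hx y hy hxy
  refine closedBall_disjoint_closedBall (lt_of_not_ge fun hle => hxy ?_)
  refine sub_eq_zero.1 (hH _ (H.sub_mem (hs hx) (hs hy)) ?_)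
  rwa [← dist_eq_norm, two_mul]

variable [MeasurableSpace G] [BorelSpace G] {μ : Measure G} [μ.IsAddHaarMeasure]

lemma measure_cthickening_finset (hS : (S : Set G).PairwiseDisjoint fun x => closedBall x ε)
    (hε : 0 ≤ ε) : μ (cthickening ε (S : Set G)) = S.card * μ (closedBall 0 ε) := by
  rw [cthickening_finset_eq_biUnion S hε,
    measure_biUnion_finset hS fun _ _ => measurableSet_closedBall]
  simp only [Measure.addHaar_closedBall_center, Finset.sum_const, nsmul_eq_mul]

lemma measure_threeAPSet_cthickening_le [SecondCountableTopology G] [SFinite μ]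
    (hS : ThreeAPFree (S : Set G)) (hSH : (S : Set G) ⊆ H)
    (hH : ∀ h ∈ H, ‖h‖ ≤ 4 * ε → h = 0) (hε : 0 ≤ ε) :
    (μ.prod μ) (threeAPSet (cthickening ε (S : Set G))) ≤ S.card * μ (closedBall 0 ε) ^ 2 := by
  calc (μ.prod μ) (threeAPSet (cthickening ε (S : Set G)))
      ≤ ∑ s ∈ S, (μ.prod μ)
          ((fun p : G × G => (p.1, p.1 + p.2)) ⁻¹' closedBall s ε ×ˢ closedBall s ε) :=
        (measure_mono (threeAPSet_cthickening_subset hS hSH hH hε)).trans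
          (measure_biUnion_finset_le S _)
    _ = ∑ s ∈ S, μ (closedBall s ε) * μ (closedBall s ε) := by
        refine Finset.sum_congr rfl fun s _ => ?_
        rw [(measurePreserving_prod_add μ μ).measure_preimage
          (measurableSet_closedBall.prod measurableSet_closedBall).nullMeasurableSet,
          Measure.prod_prod]
    _ = S.card * μ (closedBall 0 ε) ^ 2 := by
        simp only [Measure.addHaar_closedBall_center, Finset.sum_const, nsmul_eq_mul, sq]

end Thickening

section Circle

lemma eq_zero_of_mem_range_toAddCircle_of_norm_lt {M : ℕ} [NeZero M] {u : UnitAddCircle}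
    (hu : u ∈ (ZMod.toAddCircle : ZMod M →+ UnitAddCircle).range) (hlt : ‖u‖ < (M : ℝ)⁻¹) :
    u = 0 := by
  by_contra h0
  refine hlt.not_ge ?_
  obtain ⟨j, rfl⟩ := hu
  have hM : 0 < M := NeZero.pos M
  have hj : addOrderOf (ZMod.toAddCircle j) ≤ M := by
    rw [addOrderOf_injective _ (ZMod.toAddCircle_injective M)]
    simpa using addOrderOf_le_card_univ (x := j)
  have hfin : IsOfFinAddOrder (ZMod.toAddCircle j) :=
    ZMod.toAddCircle.isOfFinAddOrder (isOfFinAddOrder_of_finite j)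
  rw [inv_le_iff_one_le_mul₀' (by positivity)]
  calc 1 ≤ addOrderOf (ZMod.toAddCircle j) • ‖ZMod.toAddCircle j‖ :=
      le_add_order_smul_norm_of_isOfFinAddOrder hfin h0
    _ = addOrderOf (ZMod.toAddCircle j) * ‖ZMod.toAddCircle j‖ := nsmul_eq_mul _ _
    _ ≤ M * ‖ZMod.toAddCircle j‖ := by gcongr

lemma exists_threeAPFree_finset_zmod (N : ℕ) :
    ∃ S : Finset (ZMod (2 * N + 1)),
      ThreeAPFree (S : Set (ZMod (2 * N + 1))) ∧ S.card = rothNumberNat N := by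
  -- Modulo `2N + 1`, sums of two elements of `[0, N)` do not wrap around.
  have hval : (Fin.ofNat (2 * N + 1) N).val = N := Nat.mod_eq_of_lt (by lia)
  obtain ⟨S, -, hcard, hfree⟩ := addRothNumber_spec (Finset.Iio (Fin.ofNat (2 * N + 1) N))
  rw [Fin.addRothNumber_eq_rothNumberNat (by rw [hval]), hval] at hcard
  exact ⟨S, hfree, hcard⟩

lemma haarAddCircle_closedBall {ε : ℝ} (hε : 2 * ε ≤ 1) (x : UnitAddCircle) :
    haarAddCircle (closedBall x ε) = ENNReal.ofReal (2 * ε) := by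
  have := AddCircle.volume_closedBall 1 (x := x) ε
  rwa [volume_eq_smul_haarAddCircle, ENNReal.ofReal_one, one_smul, min_eq_right hε] at this

lemma exists_measure_threeAPSet_le_of_threeAPFree {M : ℕ} [NeZero M] {S : Finset (ZMod M)}
    (hS : ThreeAPFree (S : Set (ZMod M))) :
    ∃ B : Set UnitAddCircle, MeasurableSet B ∧
      haarAddCircle B = ENNReal.ofReal (S.card * (4 * M : ℝ)⁻¹) ∧
      (haarAddCircle.prod haarAddCircle) (threeAPSet B) ≤
        ENNReal.ofReal (S.card * (4 * M : ℝ)⁻¹ ^ 2) := by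
  classical
  let φ : ZMod M →+ UnitAddCircle := ZMod.toAddCircle
  have hφ : Function.Injective φ := ZMod.toAddCircle_injective M
  let S' : Finset UnitAddCircle := S.image φ
  let ε : ℝ := (8 * M)⁻¹
  have hε : 0 ≤ ε := by positivity
  have hM : (1 : ℝ) ≤ M := by exact_mod_cast NeZero.one_le
  have hsep (u) (hu : u ∈ φ.range) (hle : ‖u‖ ≤ 4 * ε) : u = 0 := by
    refine eq_zero_of_mem_range_toAddCircle_of_norm_lt hu (hle.trans_lt ?_)
    rw [show 4 * ε = (M : ℝ)⁻¹ / 2 by simp only [ε, mul_inv]; ring]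
    exact half_lt_self (by positivity)
  have hrange : (S' : Set UnitAddCircle) ⊆ φ.range := by simp [S', Set.subset_def]
  have hdisj := pairwiseDisjoint_closedBall_of_subset_addSubgroup hrange fun u hu hle =>
    hsep u hu (hle.trans (by linarith))
  have hS' : ThreeAPFree (S' : Set UnitAddCircle) := by
    rw [Finset.coe_image]
    exact hS.image' φ hφ.injOn
  have hball : haarAddCircle (closedBall (0 : UnitAddCircle) ε) =
      ENNReal.ofReal (4 * M : ℝ)⁻¹ := by
    have h2ε : 2 * ε = (4 * M : ℝ)⁻¹ := by simp only [ε, mul_inv]; ring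
    rw [← h2ε, haarAddCircle_closedBall (h2ε.trans_le (inv_le_one_of_one_le₀ (by linarith)))]
  have hcard : (S'.card : ENNReal) = ENNReal.ofReal S.card := by
    rw [Finset.card_image_of_injective S hφ, ENNReal.ofReal_natCast]
  refine ⟨cthickening ε S', isClosed_cthickening.measurableSet, ?_, ?_⟩
  · rw [measure_cthickening_finset hdisj hε, hball, hcard, ENNReal.ofReal_mul (Nat.cast_nonneg _)]
  · rw [ENNReal.ofReal_mul (Nat.cast_nonneg _), ENNReal.ofReal_pow (by positivity), ← hball,
      ← hcard]
    exact measure_threeAPSet_cthickening_le hS' hrange hsep hε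

end Circle

section Behrend

lemma eventually_inv_lt_mul_rothNumberNat_div_pow {c : ℝ} (hc : 0 < c) (ℓ : ℕ) :
    ∀ᶠ N : ℕ in atTop, (N : ℝ)⁻¹ < (c * (rothNumberNat N / N)) ^ ℓ := by
  have hsqrt : Tendsto (fun N : ℕ => √(Real.log N)) atTop atTop :=
    Real.tendsto_sqrt_atTop.comp (Real.tendsto_log_atTop.comp tendsto_natCast_atTop_atTop)
  filter_upwards [hsqrt.eventually_gt_atTop (ℓ * (4 + |Real.log c|)),
    hsqrt.eventually_ge_atTop 1, eventually_gt_atTop 0] with N hN hN1 hN0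
  have hN0' : (0 : ℝ) < N := by exact_mod_cast hN0
  set t := √(Real.log N)
  have hsq : Real.log N = t ^ 2 :=
    (Real.sq_sqrt (Real.log_nonneg (by exact_mod_cast hN0))).symm
  have hroth : Real.exp (-4 * t) ≤ rothNumberNat N / N := by
    rw [le_div_iff₀' hN0']
    exact Behrend.roth_lower_bound
  have hlt : ℓ * (4 * t - Real.log c) < t ^ 2 :=
    calc ℓ * (4 * t - Real.log c) ≤ ℓ * (4 * t + |Real.log c| * t) := by
          gcongr
          nlinarith [neg_abs_le (Real.log c), abs_nonneg (Real.log c)]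
      _ = ℓ * (4 + |Real.log c|) * t := by ring
      _ < t ^ 2 := by nlinarith
  calc (N : ℝ)⁻¹ = Real.exp (-t ^ 2) := by rw [← hsq, Real.exp_neg, Real.exp_log hN0']
    _ < Real.exp (ℓ * (Real.log c + -4 * t)) := by
        rw [Real.exp_lt_exp]
        linarith
    _ = (c * Real.exp (-4 * t)) ^ ℓ := by rw [Real.exp_nat_mul, Real.exp_add, Real.exp_log hc]
    _ ≤ (c * (rothNumberNat N / N)) ^ ℓ := by gcongr

end Behrend

theorem exists_measure_threeAPSet_lt_pow (ℓ : ℕ) :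
    ∃ B : Set UnitAddCircle, MeasurableSet B ∧
      (haarAddCircle.prod haarAddCircle) (threeAPSet B) < haarAddCircle B ^ ℓ := by
  obtain ⟨N, hdense, hN⟩ := ((eventually_inv_lt_mul_rothNumberNat_div_pow
    (c := 1 / 12) (by norm_num) ℓ).and (eventually_gt_atTop 0)).exists
  obtain ⟨S, hS, hcard⟩ := exists_threeAPFree_finset_zmod N
  obtain ⟨B, hB, hBeq, hBle⟩ := exists_measure_threeAPSet_le_of_threeAPFree hS
  refine ⟨B, hB, hBle.trans_lt ?_⟩
  rw [hBeq, hcard, ← ENNReal.ofReal_pow (by positivity)]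
  have hN' : (1 : ℝ) ≤ N := by exact_mod_cast hN
  have hle : (rothNumberNat N : ℝ) ≤ N := by exact_mod_cast rothNumberNat_le N
  have hinv : (12 * N : ℝ)⁻¹ ≤ (4 * (2 * N + 1) : ℝ)⁻¹ :=
    inv_anti₀ (by positivity) (by linarith)
  refine (ENNReal.ofReal_lt_ofReal_iff_of_nonneg (by positivity)).2 ?_
  push_cast
  calc rothNumberNat N * (4 * (2 * N + 1) : ℝ)⁻¹ ^ 2
      ≤ N * ((N : ℝ)⁻¹) ^ 2 := by gcongr; linarith
    _ = (N : ℝ)⁻¹ := by field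
    _ < (1 / 12 * (rothNumberNat N / N)) ^ ℓ := hdense
    _ = (rothNumberNat N * (12 * N : ℝ)⁻¹) ^ ℓ := by field
    _ ≤ (rothNumberNat N * (4 * (2 * N + 1) : ℝ)⁻¹) ^ ℓ := by gcongr

theorem no_optimal_recurrence_commuting_poly :
    ∃ (X : Type) (_ : MeasurableSpace X) (μ : Measure X) (T₁ T₂ S₁ S₂ : X → X),
      IsProbabilityMeasure μ ∧
      Measurable T₁ ∧ Measurable T₂ ∧ Measurable S₁ ∧ Measurable S₂ ∧
      Function.LeftInverse S₁ T₁ ∧ Function.RightInverse S₁ T₁ ∧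
      Function.LeftInverse S₂ T₂ ∧ Function.RightInverse S₂ T₂ ∧
      MeasurePreserving T₁ μ μ ∧ MeasurePreserving T₂ μ μ ∧
      T₁ ∘ T₂ = T₂ ∘ T₁ ∧ Ergodic T₁ μ ∧
      ∀ ℓ : ℕ, 0 < ℓ → ∃ A : Set X, MeasurableSet A ∧ 0 < μ A ∧
        ∀ n : ℕ, n ≠ 0 →
          μ (A ∩ T₁^[n] ⁻¹' A ∩ T₁^[2 * n] ⁻¹' A ∩ T₂^[n ^ 2] ⁻¹' A) < μ A ^ ℓ := by
  let α : UnitAddCircle := (√2 : ℝ)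
  let T := skewRotation α
  let R := Homeomorph.addRight (![0, -(2 • α)] : Fin 2 → UnitAddCircle)
  refine ⟨Fin 2 → UnitAddCircle, inferInstance, .pi fun _ => haarAddCircle, T, R, T.symm, R.symm,
    inferInstance, T.measurable, R.measurable, T.symm.measurable, R.symm.measurable,
    T.left_inv, T.right_inv, R.left_inv, R.right_inv,
    measurePreserving_skewRotation α, measurePreserving_add_right _ _,
    skewRotation_comp_add_right α _,
    ergodic_skewRotation (not_isOfFinAddOrder_coe_of_irrational irrational_sqrt_two),
    fun ℓ hℓ => ?_⟩
  obtain ⟨B, hB, hlt⟩ := exists_measure_threeAPSet_lt_pow ℓ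
  have hA : Measure.pi (fun _ : Fin 2 => haarAddCircle) {x | x 1 ∈ B} = haarAddCircle B :=
    (measurePreserving_eval _ 1).measure_preimage hB.nullMeasurableSet
  refine ⟨{x | x 1 ∈ B}, measurable_pi_apply 1 hB, ?_, fun n hn => ?_⟩ <;> rw [hA]
  · exact pos_iff_ne_zero.2 fun h => by simp [h, hℓ.ne'] at hlt
  · exact (measure_inter_skewRotation_preimage_le α hB hn).trans_lt hlt
end
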